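/- Let n ≥ 2, 0 < r < 1, A, B, T > 0, and let u be a convex C² function on the closed ball B̄ᵣ ⊂ ℝⁿ such that u(ξ) ≥ −A·T·√(1−|ξ|²) − B·T for all ξ ∈ Bᵣ and u(ξ) ≤ −B·T for all ξ ∈ ∂Bᵣ. Then for every point ξ = (ξ₁, 0, …, 0) with 0 < ξ₁ < r, the second angular derivative ∂²u(ξ) = ξ₁²·u₂₂(ξ) − ξ₁·u₁(ξ) (where ∂ = ξ₁∂/∂ξ₂ − ξ₂∂/∂ξ₁) satisfies (r − ξ₁)·∂²u(ξ) ≥ −A·T·ξ₁·√(1−ξ₁²). In particular (r−|ξ|)·∂²u/√(1−|ξ|²) ≥ −A·T·|ξ| at such points. -/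

import Mathlib

open Real Filter Set

noncomputable section

/-- Partial derivative of `u` in the `i`-th coordinate direction. -/
def pd (n : ℕ) (u : (Fin n → ℝ) → ℝ) (i : Fin n) (x : Fin n → ℝ) : ℝ :=
  fderiv ℝ u x (Pi.single i 1)

/-- Hessian matrix of `u`. -/
def hess (n : ℕ) (u : (Fin n → ℝ) → ℝ) (x : Fin n → ℝ) : Matrix (Fin n) (Fin n) ℝ :=
  Matrix.of fun i j => pd n (pd n u j) i x

/-- Squared Euclidean norm of the gradient. -/
def gradSq (n : ℕ) (u : (Fin n → ℝ) → ℝ) (x : Fin n → ℝ) : ℝ :=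
  ∑ i, (pd n u i x) ^ 2

/-- `w = √(1 - |Du|²)`. -/
def wF (n : ℕ) (u : (Fin n → ℝ) → ℝ) (x : Fin n → ℝ) : ℝ :=
  Real.sqrt (1 - gradSq n u x)

/-- `γ^{ik} = δ_{ik} + u_i u_k / (w (1 + w))`. -/
def gammaM (n : ℕ) (u : (Fin n → ℝ) → ℝ) (x : Fin n → ℝ) : Matrix (Fin n) (Fin n) ℝ :=
  Matrix.of fun i k =>
    (if i = k then (1 : ℝ) else 0) + pd n u i x * pd n u k x / (wF n u x * (1 + wF n u x))

/-- The principal-curvature matrix `A[u] = (1/w) γ (D²u) γ`. -/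
def curvM (n : ℕ) (u : (Fin n → ℝ) → ℝ) (x : Fin n → ℝ) : Matrix (Fin n) (Fin n) ℝ :=
  (wF n u x)⁻¹ • (gammaM n u x * hess n u x * gammaM n u x)

/-- The positive cone `Γₙ⁺`. -/
def GammaPlus (n : ℕ) : Set (Fin n → ℝ) := {κ | ∀ i, 0 < κ i}

/-- `F(A) = 1 / f_*(κ₁⁻¹, …, κₙ⁻¹)` where `κᵢ` are the eigenvalues of `A`. -/
def Fc (n : ℕ) (fstar : (Fin n → ℝ) → ℝ) (A : Matrix (Fin n) (Fin n) ℝ) : ℝ :=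
  if h : A.IsHermitian then 1 / fstar (fun i => (h.eigenvalues i)⁻¹) else 0

/-- `F_*(A) = f_*(eigenvalues of A)`. -/
def FsM (n : ℕ) (fstar : (Fin n → ℝ) → ℝ) (A : Matrix (Fin n) (Fin n) ℝ) : ℝ :=
  if h : A.IsHermitian then fstar h.eigenvalues else 0

/-- `w* = √(1 - |ξ|²)`. -/
def wS (n : ℕ) (ξ : Fin n → ℝ) : ℝ := Real.sqrt (1 - ∑ i, (ξ i) ^ 2)

/-- `γ*_{ik} = δ_{ik} - ξᵢ ξ_k / (1 + w*)`. -/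
def gammaS (n : ℕ) (ξ : Fin n → ℝ) : Matrix (Fin n) (Fin n) ℝ :=
  Matrix.of fun i k => (if i = k then (1 : ℝ) else 0) - ξ i * ξ k / (1 + wS n ξ)

/-- The dual curvature matrix `A*[u*] = w* γ* (D²u*) γ*`. -/
def dualCurvM (n : ℕ) (ustar : (Fin n → ℝ) → ℝ) (ξ : Fin n → ℝ) :
    Matrix (Fin n) (Fin n) ℝ :=
  wS n ξ • (gammaS n ξ * hess n ustar ξ * gammaS n ξ)

/-- Open Euclidean ball of radius `r` about the origin. -/
def ballE (n : ℕ) (r : ℝ) : Set (Fin n → ℝ) := {ξ | ∑ i, (ξ i) ^ 2 < r ^ 2}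

/-- Closed Euclidean ball of radius `r` about the origin. -/
def cballE (n : ℕ) (r : ℝ) : Set (Fin n → ℝ) := {ξ | ∑ i, (ξ i) ^ 2 ≤ r ^ 2}

/-- Euclidean sphere of radius `r` about the origin. -/
def sphereE (n : ℕ) (r : ℝ) : Set (Fin n → ℝ) := {ξ | ∑ i, (ξ i) ^ 2 = r ^ 2}

/-- The full structural conditions on the curvature function `f_*`. -/
def FullStructural (n : ℕ) (fstar : (Fin n → ℝ) → ℝ) : Prop :=
  ContDiffOn ℝ (⊤ : ℕ∞) fstar (GammaPlus n) ∧
  ConcaveOn ℝ (GammaPlus n) fstar ∧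
  (∀ κ ∈ GammaPlus n, 0 < fstar κ) ∧
  (∀ κ ∈ frontier (GammaPlus n), fstar κ = 0) ∧
  (∀ κ ∈ GammaPlus n, ∀ i, 0 < fderiv ℝ fstar κ (Pi.single i 1)) ∧
  (∀ c : ℝ, 0 < c → ∀ κ ∈ GammaPlus n, fstar (c • κ) = c * fstar κ) ∧
  (∃ ε₀ > (0 : ℝ), ∀ κ ∈ GammaPlus n,
    ε₀ * fstar κ * (∑ i, κ i) ≤ ∑ i, fderiv ℝ fstar κ (Pi.single i 1) * (κ i) ^ 2) ∧
  (∀ C > (0 : ℝ), ∀ E : Set (Fin n → ℝ), IsCompact E → E ⊆ GammaPlus n →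
    ∀ i₀ : Fin n, ∃ R > (0 : ℝ), ∀ κ ∈ E, C < fstar (Function.update κ i₀ (κ i₀ + R))) ∧
  fstar (fun _ => 1) = 1

/-- Conditions A on the initial hypersurface. -/
def ConditionsA (n : ℕ) (u₀ : (Fin n → ℝ) → ℝ) (C₀ C₁ : ℝ) : Prop :=
  ContDiff ℝ (⊤ : ℕ∞) u₀ ∧
  (∀ x, gradSq n u₀ x < 1) ∧
  (∀ x, (hess n u₀ x).PosDef) ∧
  (∀ k : ℕ, ∀ i j : Fin n, ∃ M : ℝ, ∀ x,
      ‖iteratedFDeriv ℝ k (fun y => curvM n u₀ y i j) x‖ ≤ M) ∧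
  (∀ x, Real.sqrt ((∑ i, (x i) ^ 2) + C₀) < u₀ x ∧ u₀ x < Real.sqrt ((∑ i, (x i) ^ 2) + C₁))

/-!
Convexity makes `u₂₂` nonnegative, so only the term `-ξ₁ u₁` of the angular derivative can be
negative. Convexity along the radius through `ξ` bounds `u₁` by the slope of the chord to the
boundary point `(r, 0, …, 0)`, and the barriers bound the values of `u` at the two ends of that
chord.
-/

section Convex

variable {E : Type*} [NormedAddCommGroup E] [NormedSpace ℝ E] {s : Set E} {f : E → ℝ} {x y : E}

theorem fderiv_sub_le_of_convexOn (hconv : ConvexOn ℝ s f) (hx : x ∈ s) (hy : y ∈ s)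
    (hf : DifferentiableAt ℝ f x) : fderiv ℝ f x (y - x) ≤ f y - f x := by
  have hconv_line : ConvexOn ℝ (Icc (0 : ℝ) 1) (f ∘ AffineMap.lineMap x y) :=
    (hconv.comp_affineMap (AffineMap.lineMap x y)).subset
      (fun _ ht => hconv.1.lineMap_mem hx hy ht) (convex_Icc 0 1)
  have hderiv : HasDerivAt (f ∘ AffineMap.lineMap x y) (fderiv ℝ f x (y - x)) (0 : ℝ) :=
    hf.hasFDerivAt.comp_hasDerivAt_of_eq 0 AffineMap.hasDerivAt_lineMap
      (AffineMap.lineMap_apply_zero x y).symm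
  simpa [slope_def_field] using
    hconv_line.le_slope_of_hasDerivAt (x := 0) (y := 1) (by simp) (by simp) one_pos hderiv

theorem fderiv_sub_fderiv_apply_sub_nonneg_of_convexOn (hconv : ConvexOn ℝ s f)
    (hx : x ∈ s) (hy : y ∈ s) (hfx : DifferentiableAt ℝ f x) (hfy : DifferentiableAt ℝ f y) :
    0 ≤ (fderiv ℝ f y - fderiv ℝ f x) (y - x) := by
  have hxy := fderiv_sub_le_of_convexOn hconv hx hy hfx
  have hyx := fderiv_sub_le_of_convexOn hconv hy hx hfy
  rw [← neg_sub y x, map_neg] at hyx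
  rw [sub_apply]
  linarith

theorem fderiv_fderiv_apply_self_nonneg_of_convexOn (hconv : ConvexOn ℝ s f) (hs : s ∈ nhds x)
    (hf : ∀ᶠ y in nhds x, DifferentiableAt ℝ f y) (hf' : DifferentiableAt ℝ (fderiv ℝ f) x)
    (v : E) : 0 ≤ fderiv ℝ (fderiv ℝ f) x v v := by
  have hslope := ((ContinuousLinearMap.apply ℝ ℝ v).continuous.tendsto _).comp
    (hf'.hasFDerivAt.hasLineDerivAt v).tendsto_slope_zero_right
  have hline : Tendsto (fun t : ℝ => x + t • v) (nhds 0) (nhds x) :=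
    Continuous.tendsto' (by fun_prop) _ _ (by simp)
  refine ge_of_tendsto hslope ?_
  filter_upwards [nhdsWithin_le_nhds (hline.eventually (hf.and hs)), self_mem_nhdsWithin]
    with t ⟨hft, hst⟩ ht
  have hmono := fderiv_sub_fderiv_apply_sub_nonneg_of_convexOn hconv (mem_of_mem_nhds hs) hst
    hf.self_of_nhds hft
  rw [add_sub_cancel_left, map_smul, smul_eq_mul] at hmono
  exact mul_nonneg (inv_nonneg.2 (mem_Ioi.1 ht).le) (nonneg_of_mul_nonneg_right hmono ht)

end Convex

section Coordinates

variable {n : ℕ} {s : Set (Fin n → ℝ)} {u : (Fin n → ℝ) → ℝ} {x : Fin n → ℝ}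

theorem hess_apply_eq_fderiv_fderiv (hu' : DifferentiableAt ℝ (fderiv ℝ u) x) (i j : Fin n) :
    hess n u x i j = fderiv ℝ (fderiv ℝ u) x (Pi.single i 1) (Pi.single j 1) := by
  have hpd : HasFDerivAt (pd n u j) ((fderiv ℝ (fderiv ℝ u) x).flip (Pi.single j 1)) x := by
    simpa [pd] using! hu'.hasFDerivAt.clm_apply (hasFDerivAt_const (Pi.single j (1 : ℝ)) x)
  exact congrArg (· (Pi.single i 1)) hpd.fderiv

theorem hess_self_nonneg_of_convexOn (hconv : ConvexOn ℝ s u) (hs : s ∈ nhds x)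
    (hu : ContDiffAt ℝ 2 u x) (j : Fin n) : 0 ≤ hess n u x j j := by
  have hu' : DifferentiableAt ℝ (fderiv ℝ u) x :=
    (hu.fderiv_right (m := 1) (by norm_num)).differentiableAt one_ne_zero
  have hdiff : ∀ᶠ y in nhds x, DifferentiableAt ℝ u y :=
    (hu.eventually (by simp)).mono fun _ hy => hy.differentiableAt two_ne_zero
  rw [hess_apply_eq_fderiv_fderiv hu']
  exact fderiv_fderiv_apply_self_nonneg_of_convexOn hconv hs hdiff hu' _

theorem sub_mul_pd_single_le_of_convexOn {i : Fin n} {a b : ℝ} (hconv : ConvexOn ℝ s u)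
    (ha : Pi.single i a ∈ s) (hb : Pi.single i b ∈ s)
    (hu : DifferentiableAt ℝ u (Pi.single i a)) :
    (b - a) * pd n u i (Pi.single i a) ≤ u (Pi.single i b) - u (Pi.single i a) := by
  have hdir : (Pi.single i b - Pi.single i a : Fin n → ℝ) = (b - a) • Pi.single i 1 := by
    rw [← Pi.single_sub, ← Pi.single_smul, smul_eq_mul, mul_one]
  simpa only [hdir, map_smul, smul_eq_mul, pd] using fderiv_sub_le_of_convexOn hconv ha hb hu

theorem sum_single_sq (i : Fin n) (a : ℝ) : ∑ k, (Pi.single i a : Fin n → ℝ) k ^ 2 = a ^ 2 := by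
  simp [Pi.single_apply, ite_pow]

theorem isOpen_ballE (r : ℝ) : IsOpen (ballE n r) :=
  isOpen_lt (by fun_prop) continuous_const

theorem ballE_subset_cballE (r : ℝ) : ballE n r ⊆ cballE n r :=
  fun ξ (hξ : ∑ i, ξ i ^ 2 < r ^ 2) => hξ.le

theorem sphereE_subset_cballE (r : ℝ) : sphereE n r ⊆ cballE n r :=
  fun ξ (hξ : ∑ i, ξ i ^ 2 = r ^ 2) => hξ.le

theorem single_mem_ballE {i : Fin n} {a r : ℝ} (h : |a| < r) : Pi.single i a ∈ ballE n r :=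
  (sum_single_sq i a).trans_lt (sq_lt_sq' (abs_lt.1 h).1 (abs_lt.1 h).2)

theorem single_mem_sphereE (i : Fin n) (r : ℝ) : Pi.single i r ∈ sphereE n r :=
  sum_single_sq i r

end Coordinates

theorem statement18_general {n : ℕ} {r M : ℝ} {φ u : (Fin n → ℝ) → ℝ}
    (hu : ContDiffOn ℝ 2 u (ballE n r)) (hconv : ConvexOn ℝ (cballE n r) u)
    (hlow : ∀ ξ ∈ ballE n r, φ ξ ≤ u ξ) (hup : ∀ ξ ∈ sphereE n r, u ξ ≤ M)
    (i j : Fin n) {a : ℝ} (ha : 0 ≤ a) (har : a < r) :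
    a * (φ (Pi.single i a) - M) ≤
      (r - a) * (a ^ 2 * hess n u (Pi.single i a) j j - a * pd n u i (Pi.single i a)) := by
  have hball : Pi.single i a ∈ ballE n r := single_mem_ballE (by rwa [abs_of_nonneg ha])
  have hsphere := single_mem_sphereE i r
  have hnhds : ballE n r ∈ nhds (Pi.single i a) := (isOpen_ballE r).mem_nhds hball
  have hua : ContDiffAt ℝ 2 u (Pi.single i a) := hu.contDiffAt hnhds
  have hhess : 0 ≤ hess n u (Pi.single i a) j j :=
    hess_self_nonneg_of_convexOn hconv (mem_of_superset hnhds (ballE_subset_cballE r)) hua j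
  have hchord : (r - a) * pd n u i (Pi.single i a) ≤ M - φ (Pi.single i a) :=
    (sub_mul_pd_single_le_of_convexOn hconv (ballE_subset_cballE r hball)
      (sphereE_subset_cballE r hsphere) (hua.differentiableAt two_ne_zero)).trans
      (sub_le_sub (hup _ hsphere) (hlow _ hball))
  have htangential : 0 ≤ (r - a) * (a ^ 2 * hess n u (Pi.single i a) j j) :=
    mul_nonneg (sub_nonneg.2 har.le) (mul_nonneg (sq_nonneg a) hhess)
  have hradial := mul_le_mul_of_nonneg_left hchord ha
  linarith

/-- Lower bound for the second angular derivative of a convex function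
with barrier bounds: at `ξ = (ξ₁,0,…,0)` with `0 < ξ₁ < r`,
`(r − ξ₁)·(ξ₁² u₂₂(ξ) − ξ₁ u₁(ξ)) ≥ −A T ξ₁ √(1−ξ₁²)`. -/
theorem statement18 (n : ℕ) (hn : 2 ≤ n) (r A B T : ℝ)
    (hr : 0 < r) (hr1 : r < 1) (hA : 0 < A) (hB : 0 < B) (hT : 0 < T)
    (u : (Fin n → ℝ) → ℝ) (hu : ContDiffOn ℝ 2 u (cballE n r))
    (hconv : ConvexOn ℝ (cballE n r) u)
    (hlow : ∀ ξ ∈ ballE n r,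
      -A * T * Real.sqrt (1 - ∑ i, (ξ i) ^ 2) - B * T ≤ u ξ)
    (hup : ∀ ξ ∈ sphereE n r, u ξ ≤ -B * T) :
    ∀ ξ₁ : ℝ, 0 < ξ₁ → ξ₁ < r →
      -A * T * ξ₁ * Real.sqrt (1 - ξ₁ ^ 2) ≤
        (r - ξ₁) *
          (ξ₁ ^ 2 * hess n u (fun i => if i = (⟨0, by omega⟩ : Fin n) then ξ₁ else 0)
              ⟨1, by omega⟩ ⟨1, by omega⟩
            - ξ₁ * pd n u ⟨0, by omega⟩
                (fun i => if i = (⟨0, by omega⟩ : Fin n) then ξ₁ else 0)) := by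
  intro ξ₁ hξ₁ hξ₁r
  have hbound := statement18_general (hu.mono (ballE_subset_cballE r)) hconv hlow hup
    ⟨0, by omega⟩ ⟨1, by omega⟩ hξ₁.le hξ₁r
  simp only [← Pi.single_apply]
  rw [sum_single_sq] at hbound
  linarith

end
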